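/- Assume that every one-letter word is good, and that every word whose Lyndon factorization consists entirely of good Lyndon words is itself good. Then every word is integral if and only if for every pair (l_1, l_2) of good Lyndon words with l_1 < l_2 lexicographically and l_1 l_2 not good, the word l_1 l_2 is integral. -/

import Mathlib

/-- The lexicographic order on words over the alphabet `v_0 < v_1 < ⋯ < v_{n-1}`
(indexed by `Fin n`), in which a word is smaller than any word having it as a proper prefix. -/
def LexLt {n : ℕ} (x y : List (Fin n)) : Prop := List.Lex (· < ·) x y

/-- The order `≺` : `x ≺ y` iff `ℓ(x) < ℓ(y)`, or `ℓ(x) = ℓ(y)` and `x > y` lexicographically. -/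
def PrecLt {n : ℕ} (x y : List (Fin n)) : Prop :=
  x.length < y.length ∨ (x.length = y.length ∧ LexLt y x)

/-- The order `≼` : `x ≼ y` iff `x ≺ y` or `x = y`. -/
def PrecLe {n : ℕ} (x y : List (Fin n)) : Prop := PrecLt x y ∨ x = y

/-- A nonempty word is Lyndon if it is lexicographically strictly smaller than every proper
nonempty suffix of itself. -/
def IsLyndon {n : ℕ} (l : List (Fin n)) : Prop :=
  l ≠ [] ∧ ∀ k : ℕ, 0 < k → k < l.length → LexLt l (l.drop k)

/-- `B_w = b_{i_1} ⋯ b_{i_k} ∈ R` for the word `w = v_{i_1} ⋯ v_{i_k}` (`B_w = 1` for `w = []`). -/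
def Bword {n : ℕ} {R : Type*} [Monoid R] (b : Fin n → R) (w : List (Fin n)) : R :=
  (w.map b).prod

/-- A word `g` is good if `B_g` does not lie in the `K`-linear span of the `B_w` with `w ≺ g`. -/
def IsGood (K : Type*) {n : ℕ} {R : Type*} [Field K] [Ring R] [Algebra K R]
    (b : Fin n → R) (g : List (Fin n)) : Prop :=
  Bword b g ∉ Submodule.span K (Bword b '' {w | PrecLt w g})

/-- The subring `ℤ[q, q⁻¹]` of `ℚ(q)`. -/
noncomputable def LaurentInt : Subring (RatFunc ℚ) :=
  Subring.closure {RatFunc.X, (RatFunc.X)⁻¹}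

/-- A word `w` is integral if `B_w` is a `ℤ[q,q⁻¹]`-linear combination of the `B_g` with `g` a
good word satisfying `g ≼ w`. -/
def IsIntegralWord {n : ℕ} {R : Type*} [Ring R] [Algebra (RatFunc ℚ) R]
    (b : Fin n → R) (w : List (Fin n)) : Prop :=
  ∃ (s : Finset (List (Fin n))) (c : List (Fin n) → RatFunc ℚ),
    (∀ g ∈ s, IsGood (RatFunc ℚ) b g ∧ PrecLe g w) ∧ (∀ g ∈ s, c g ∈ LaurentInt) ∧
    Bword b w = ∑ g ∈ s, c g • Bword b g

/-!
Only the implication from pairs to all words has content. Two observations combine.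

* A word with no factor `l₁ l₂` as in the hypothesis is good. Read the word from right to left,
  keeping a lexicographically non-increasing factorization into good Lyndon words: a new letter
  smaller than the leading factor is merged with it, which gives a good Lyndon word again, and so
  on until the leading two factors are in the right order.
* The order `≺` is well founded and compatible with concatenation on both sides. So if a bad
  factor `m = l₁ l₂` of `w` is integral, rewriting `m` inside `w` expresses `B_w` through words
  `≺ w`, which are integral by induction.

Linear algebra enters only through the second observation, and there only as rewriting. So the
good words may be replaced by any set `P` of words containing the letters and the non-increasing
products of Lyndon words in `P`, and `ℤ[q, q⁻¹]` by any commutative semiring.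
-/

section Words

variable {n : ℕ} {l x y z u v w : List (Fin n)}

theorem lexLt_iff_lt : LexLt x y ↔ x < y :=
  Iff.rfl

theorem lex_append_append_of_not_prefix {α : Type*} {r : α → α → Prop} {x y : List α}
    (h : List.Lex r x y) (hxy : ¬ x <+: y) (u v : List α) :
    List.Lex r (x ++ u) (y ++ v) := by
  induction h with
  | nil => exact absurd List.nil_prefix hxy
  | rel hab => exact .rel hab
  | cons _ ih => exact .cons (ih fun hp => hxy (List.cons_prefix_cons.2 ⟨rfl, hp⟩))

theorem LexLt.append_append_of_length_le (h : LexLt x y) (hl : y.length ≤ x.length)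
    (u v : List (Fin n)) : LexLt (x ++ u) (y ++ v) := by
  refine lex_append_append_of_not_prefix h (fun hp => ?_) u v
  obtain rfl : x = y := hp.eq_of_length_le hl
  exact lt_irrefl x (lexLt_iff_lt.1 h)

theorem isLyndon_iff_forall_append :
    IsLyndon l ↔ l ≠ [] ∧ ∀ u v, u ≠ [] → v ≠ [] → u ++ v = l → LexLt l v := by
  refine and_congr_right fun _ => ⟨?_, fun h k hk hkl => ?_⟩
  · rintro h u v hu hv rfl
    simpa using h u.length (List.length_pos_iff.2 hu) (by simpa [List.length_pos_iff] using hv)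
  · refine h (l.take k) (l.drop k) ?_ (by simpa using hkl) (List.take_append_drop k l)
    exact List.length_pos_iff.1 (by simp; omega)

theorem isLyndon_singleton (i : Fin n) : IsLyndon [i] :=
  ⟨List.cons_ne_nil i [], fun _ hk hk' => by simp at hk'; omega⟩

theorem IsLyndon.lexLt_of_append (h : IsLyndon (u ++ v)) (hu : u ≠ []) (hv : v ≠ []) :
    LexLt (u ++ v) v :=
  (isLyndon_iff_forall_append.1 h).2 u v hu hv rfl

theorem IsLyndon.append_lexLt_right (hx : x ≠ []) (hy : IsLyndon y) (h : LexLt x y) :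
    LexLt (x ++ y) y := by
  by_cases hp : x <+: y
  · obtain ⟨z, rfl⟩ := hp
    have hz : z ≠ [] := by
      rintro rfl
      rw [List.append_nil] at h
      exact lt_irrefl x (lexLt_iff_lt.1 h)
    exact List.Lex.append_left _ (hy.lexLt_of_append hx hz) x
  · have hlex : LexLt (x ++ y) (y ++ []) := lex_append_append_of_not_prefix h hp y []
    rwa [List.append_nil] at hlex

theorem IsLyndon.append (hx : IsLyndon x) (hy : IsLyndon y) (h : LexLt x y) :
    IsLyndon (x ++ y) := by
  have hxy : LexLt (x ++ y) y := hy.append_lexLt_right hx.1 h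
  refine isLyndon_iff_forall_append.2
    ⟨List.append_ne_nil_of_left_ne_nil hx.1 y, fun u v hu hv huv => ?_⟩
  rcases List.append_eq_append_iff.1 huv with ⟨c, rfl, rfl⟩ | ⟨c, rfl, rfl⟩
  · rcases eq_or_ne c [] with rfl | hc
    · simpa using hxy
    · exact (hx.lexLt_of_append hu hc).append_append_of_length_le (by simp) y y
  · rcases eq_or_ne c [] with rfl | hc
    · simpa using hxy
    · exact lt_trans (lexLt_iff_lt.1 hxy) (lexLt_iff_lt.1 (hy.lexLt_of_append hc hv))

theorem precLt_iff_toLex_lt :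
    PrecLt x y ↔
      toLex (x.length, OrderDual.toDual x) < toLex (y.length, OrderDual.toDual y) :=
  (Prod.Lex.toLex_lt_toLex (x := (x.length, OrderDual.toDual x))
    (y := (y.length, OrderDual.toDual y))).symm

instance : IsStrictOrder (List (Fin n)) PrecLt where
  irrefl _ h := lt_irrefl _ (precLt_iff_toLex_lt.1 h)
  trans _ _ _ h₁ h₂ :=
    precLt_iff_toLex_lt.2 ((precLt_iff_toLex_lt.1 h₁).trans (precLt_iff_toLex_lt.1 h₂))

theorem PrecLt.length_le (h : PrecLt x y) : x.length ≤ y.length :=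
  h.elim le_of_lt fun h => h.1.le

theorem PrecLt.trans (h₁ : PrecLt x y) (h₂ : PrecLt y z) : PrecLt x z :=
  _root_.trans h₁ h₂

theorem PrecLe.trans_precLt (h₁ : PrecLe x y) (h₂ : PrecLt y z) : PrecLt x z := by
  rcases h₁ with h₁ | rfl
  · exact h₁.trans h₂
  · exact h₂

theorem PrecLt.append_append (h : PrecLt x y) (u v : List (Fin n)) :
    PrecLt (u ++ x ++ v) (u ++ y ++ v) := by
  rcases h with h | ⟨hl, h⟩
  · exact .inl (by simpa using h)
  · refine .inr ⟨by simpa using hl, ?_⟩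
    rw [List.append_assoc, List.append_assoc]
    exact List.Lex.append_left _ (h.append_append_of_length_le hl.le v v) u

theorem wellFounded_precLt : WellFounded (PrecLt (n := n)) := by
  refine ⟨fun w => (Set.WellFoundedOn.acc_iff_wellFoundedOn.out 0 2).2 ?_⟩
  refine ((List.finite_length_le (Fin n) w.length).subset fun x hx => ?_).wellFoundedOn
  rw [Set.mem_ofPred_eq, Relation.transGen_eq_self] at hx
  exact PrecLt.length_le hx

end Words

section LyndonFactorization

variable {n : ℕ} {P : List (Fin n) → Prop} {l w : List (Fin n)} {L : List (List (Fin n))}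

/-- `L` is the Lyndon factorization of the word `L.flatten`, and all its factors satisfy `P`.
The condition `l₁ ≥ l₂ ≥ ⋯` is encoded by adjacent factors not being increasing. -/
def IsLyndonFactorization (P : List (Fin n) → Prop) (L : List (List (Fin n))) : Prop :=
  (∀ l ∈ L, IsLyndon l ∧ P l) ∧ L.IsChain fun l₁ l₂ => ¬ LexLt l₁ l₂

/-- The pairs of the integrality criterion: increasing pairs of Lyndon words satisfying `P` whose
product, which is again Lyndon, violates `P`. -/
def IsCriticalPair (P : List (Fin n) → Prop) (l₁ l₂ : List (Fin n)) : Prop :=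
  IsLyndon l₁ ∧ IsLyndon l₂ ∧ P l₁ ∧ P l₂ ∧ LexLt l₁ l₂ ∧ ¬ P (l₁ ++ l₂)

theorem exists_isLyndonFactorization_append (hl : IsLyndon l) (hP : P l)
    (hL : IsLyndonFactorization P L)
    (hcrit : ∀ l₁ l₂, IsCriticalPair P l₁ l₂ → ¬ l₁ ++ l₂ <:+: l ++ L.flatten) :
    ∃ L', IsLyndonFactorization P L' ∧ L'.flatten = l ++ L.flatten := by
  induction L generalizing l with
  | nil => exact ⟨[l], by simp [IsLyndonFactorization, hl, hP], by simp⟩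
  | cons l₁ L ih =>
    obtain ⟨⟨hl₁, hP₁⟩, hmem⟩ := List.forall_mem_cons.1 hL.1
    by_cases hlt : LexLt l l₁
    · have hgood : P (l ++ l₁) := by
        by_contra hbad
        exact hcrit l l₁ ⟨hl, hl₁, hP, hP₁, hlt, hbad⟩ ⟨[], L.flatten, by simp⟩
      obtain ⟨L', hL', hflat⟩ := ih (hl.append hl₁ hlt) hgood ⟨hmem, hL.2.tail⟩
        (by simpa using hcrit)
      exact ⟨L', hL', by simpa using hflat⟩
    · exact ⟨l :: l₁ :: L, ⟨List.forall_mem_cons.2 ⟨⟨hl, hP⟩, hL.1⟩, hL.2.cons_cons hlt⟩, rfl⟩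

theorem exists_isLyndonFactorization (hletters : ∀ i, P [i])
    (hcrit : ∀ l₁ l₂, IsCriticalPair P l₁ l₂ → ¬ l₁ ++ l₂ <:+: w) :
    ∃ L, IsLyndonFactorization P L ∧ L.flatten = w := by
  induction w with
  | nil => exact ⟨[], by simp [IsLyndonFactorization], rfl⟩
  | cons i w ih =>
    obtain ⟨L, hL, rfl⟩ := ih fun l₁ l₂ hc hw => hcrit l₁ l₂ hc (List.infix_cons hw)
    exact exists_isLyndonFactorization_append (isLyndon_singleton i) (hletters i) hL hcrit

theorem exists_isCriticalPair_infix (hletters : ∀ i, P [i])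
    (hfact : ∀ L, IsLyndonFactorization P L → P L.flatten) (hw : ¬ P w) :
    ∃ l₁ l₂, IsCriticalPair P l₁ l₂ ∧ l₁ ++ l₂ <:+: w := by
  by_contra! hcrit
  obtain ⟨L, hL, rfl⟩ := exists_isLyndonFactorization hletters hcrit
  exact hw (hfact L hL)

end LyndonFactorization

section Straightening

variable {n : ℕ} {A R : Type*} [CommSemiring A] [Semiring R] [Algebra A R]
  {b : Fin n → R} {P : List (Fin n) → Prop} {m w : List (Fin n)}

theorem Bword_append {M : Type*} [Monoid M] (b : Fin n → M) (x y : List (Fin n)) :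
    Bword b (x ++ y) = Bword b x * Bword b y := by
  simp [Bword]

/-- Integrality of a word relative to coefficients `A` and to an arbitrary predicate `P` in place
of goodness. The integral words of the theorem are the case `A = ℤ[q, q⁻¹]`, `P = IsGood ℚ(q) b`. -/
def IsStraightenable (A : Type*) [CommSemiring A] [Algebra A R] (b : Fin n → R)
    (P : List (Fin n) → Prop) (w : List (Fin n)) : Prop :=
  Bword b w ∈ Submodule.span A (Bword b '' {g | P g ∧ PrecLe g w})

theorem isStraightenable_of_prop (hw : P w) : IsStraightenable A b P w :=
  Submodule.subset_span ⟨w, ⟨hw, .inr rfl⟩, rfl⟩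

theorem IsStraightenable.mem_span_precLt (hm : IsStraightenable A b P m) (hP : ¬ P m) :
    Bword b m ∈ Submodule.span A (Bword b '' {g | PrecLt g m}) := by
  refine Submodule.span_mono (Set.image_mono ?_) hm
  rintro g ⟨hg, hgm | rfl⟩
  · exact hgm
  · exact absurd hg hP

theorem isStraightenable_of_mem_span_precLt
    (hlt : ∀ x, PrecLt x w → IsStraightenable A b P x)
    (hw : Bword b w ∈ Submodule.span A (Bword b '' {x | PrecLt x w})) :
    IsStraightenable A b P w := by
  refine Submodule.span_le.2 ?_ hw
  rintro _ ⟨x, hx, rfl⟩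
  refine Submodule.span_mono (Set.image_mono ?_) (hlt x hx)
  rintro g ⟨hg, hgx⟩
  exact ⟨hg, .inl (hgx.trans_precLt hx)⟩

theorem Bword_mem_span_precLt_of_infix (hmw : m <:+: w)
    (hm : Bword b m ∈ Submodule.span A (Bword b '' {x | PrecLt x m})) :
    Bword b w ∈ Submodule.span A (Bword b '' {x | PrecLt x w}) := by
  obtain ⟨u, v, rfl⟩ := hmw
  let φ : R →ₗ[A] R := LinearMap.mulLeftRight A (Bword b u, Bword b v)
  have hφ (x : List (Fin n)) : φ (Bword b x) = Bword b (u ++ x ++ v) := by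
    simp only [φ, LinearMap.mulLeftRight_apply, Bword_append]
  rw [← hφ]
  refine Submodule.span_le (p := (Submodule.span A _).comap φ).2 ?_ hm
  rintro _ ⟨x, hx, rfl⟩
  exact Submodule.subset_span ⟨_, PrecLt.append_append hx u v, (hφ x).symm⟩

theorem integral_condition_reduction_general (b : Fin n → R) (hletters : ∀ i, P [i])
    (hfact : ∀ L, IsLyndonFactorization P L → P L.flatten) :
    (∀ w, IsStraightenable A b P w) ↔
      ∀ l₁ l₂, IsCriticalPair P l₁ l₂ → IsStraightenable A b P (l₁ ++ l₂) := by
  refine ⟨fun h _ _ _ => h _, fun h w => ?_⟩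
  induction w using wellFounded_precLt.induction with
  | h w ih =>
    by_cases hw : P w
    · exact isStraightenable_of_prop hw
    obtain ⟨l₁, l₂, hcrit, hinfix⟩ := exists_isCriticalPair_infix hletters hfact hw
    have ⟨_, _, _, _, _, hbad⟩ := hcrit
    exact isStraightenable_of_mem_span_precLt ih
      (Bword_mem_span_precLt_of_infix hinfix ((h l₁ l₂ hcrit).mem_span_precLt hbad))

end Straightening

theorem isIntegralWord_iff_isStraightenable {n : ℕ} {R : Type*} [Ring R]
    [Algebra (RatFunc ℚ) R] {b : Fin n → R} {w : List (Fin n)} :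
    IsIntegralWord b w ↔ IsStraightenable LaurentInt b (IsGood (RatFunc ℚ) b) w := by
  constructor
  · rintro ⟨s, c, hs, hc, hw⟩
    rw [IsStraightenable, hw]
    exact Submodule.sum_mem _ fun g hg =>
      Submodule.smul_mem _ (⟨c g, hc g hg⟩ : LaurentInt) (Submodule.subset_span ⟨g, hs g hg, rfl⟩)
  · intro h
    obtain ⟨c, hc, hw⟩ := (Finsupp.mem_span_image_iff_linearCombination _).1 h
    exact ⟨c.support, fun g => c g, fun g hg => hc hg, fun g _ => (c g).2, hw.symm⟩

/-- Assume every one-letter word is good and every word whose Lyndon factorization consists of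
good Lyndon words is good. Then every word is integral iff for every pair `(l₁, l₂)` of good
Lyndon words with `l₁ < l₂` lexicographically and `l₁l₂` not good, the word `l₁l₂` is
integral. -/
theorem integral_condition_reduction {n : ℕ} {R : Type*} [Ring R] [Algebra (RatFunc ℚ) R]
    (b : Fin n → R) (hgen : Algebra.adjoin (RatFunc ℚ) (Set.range b) = ⊤)
    (hletters : ∀ i : Fin n, IsGood (RatFunc ℚ) b [i])
    (hfact : ∀ L : List (List (Fin n)),
      (∀ l ∈ L, IsLyndon l ∧ IsGood (RatFunc ℚ) b l) →
      L.Chain' (fun a b => ¬ LexLt a b) → IsGood (RatFunc ℚ) b L.flatten) :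
    (∀ w : List (Fin n), IsIntegralWord b w) ↔
      (∀ l₁ l₂ : List (Fin n), IsLyndon l₁ → IsLyndon l₂ →
        IsGood (RatFunc ℚ) b l₁ → IsGood (RatFunc ℚ) b l₂ → LexLt l₁ l₂ →
        ¬ IsGood (RatFunc ℚ) b (l₁ ++ l₂) → IsIntegralWord b (l₁ ++ l₂)) := by
  simp only [isIntegralWord_iff_isStraightenable]
  simpa only [IsCriticalPair, and_imp] using
    integral_condition_reduction_general b hletters fun L hL => hfact L hL.1 hL.2
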